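/- arXiv:1409.1097 — 2 statements merged into one kernel-verified Lean document; each statement's English description precedes it below -/
import Mathlib

section
/- Let N ≥ 2 and let k_1, …, k_N be as in the context. Then ρ = 1 if and only if N = 2, k_1 = 2 and k_2 = 3. -/
/-- The quantity `ρ` for the first `n` multiplicities. -/
def rhoAux (k : ℕ → ℕ) (n : ℕ) : ℤ :=
  ((n : ℤ) - 1) * ((∏ i ∈ Finset.range n, k i : ℕ) : ℤ) -
    ∑ i ∈ Finset.range n, (((∏ j ∈ Finset.range n, k j) / k i : ℕ) : ℤ)

/-- The recursion for `rhoAux`. -/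
lemma rhoAux_succ (k : ℕ → ℕ) (n : ℕ) (hn : 0 < k n) :
    rhoAux k (n + 1) = (k n : ℤ) * rhoAux k n +
      ((k n : ℤ) - 1) * ((∏ i ∈ Finset.range n, k i : ℕ) : ℤ) := by
  have h : ∑ i ∈ Finset.range n, (((∏ j ∈ Finset.range n, k j) * k n / k i : ℕ) : ℤ)
      = (k n : ℤ) * ∑ i ∈ Finset.range n, (((∏ j ∈ Finset.range n, k j) / k i : ℕ) : ℤ) := by
    rw [Finset.mul_sum]
    refine Finset.sum_congr rfl fun i hi => ?_
    rw [Nat.mul_comm, Nat.mul_div_assoc _ (Finset.dvd_prod_of_mem k hi)]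
    push_cast
    ring
  unfold rhoAux
  rw [Finset.sum_range_succ, Finset.prod_range_succ, h, Nat.mul_div_cancel _ hn]
  push_cast
  ring

lemma rhoAux_two (k : ℕ → ℕ) (h0 : 0 < k 0) (h1 : 0 < k 1) :
    rhoAux k 2 = ((k 0 : ℤ) - 1) * ((k 1 : ℤ) - 1) - 1 := by
  rw [rhoAux_succ k 1 h1, rhoAux_succ k 0 h0]
  simp [rhoAux]
  ring

/-- Remark after Proposition 3.1: `ρ = 1` iff `N = 2`, `k 0 = 2` and `k 1 = 3`. -/
theorem rho_eq_one_iff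
    (N : ℕ) (hN : 2 ≤ N) (k : ℕ → ℕ)
    (hk : ∀ i < N, 1 < k i)
    (hmono : ∀ i j, i < j → j < N → k i < k j)
    (hcop : ∀ i j, i < j → j < N → Nat.Coprime (k i) (k j))
    (M : ℕ) (hM : M = ∏ i ∈ Finset.range N, k i)
    (ρ : ℤ)
    (hρ : ρ = ((N : ℤ) - 1) * (M : ℤ) - ∑ i ∈ Finset.range N, ((M / k i : ℕ) : ℤ)) :
    ρ = 1 ↔ (N = 2 ∧ k 0 = 2 ∧ k 1 = 3) := by
  have hr : ρ = rhoAux k N := by rw [hρ, hM, rhoAux]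
  have h0 := hk 0 (by omega)
  have h1 := hk 1 (by omega)
  have h01 := hmono 0 1 (by omega) (by omega)
  have h2 := rhoAux_two k (by omega) (by omega)
  have step : ∀ n, n < N → 1 ≤ rhoAux k n → 2 ≤ rhoAux k (n + 1) := by
    intro n hn hp
    have hkn := hk n hn
    rw [rhoAux_succ k n (by omega)]
    have hk2 : (2 : ℤ) ≤ k n := by exact_mod_cast hkn
    have hP : (0 : ℤ) ≤ ((∏ i ∈ Finset.range n, k i : ℕ) : ℤ) := Int.natCast_nonneg _
    nlinarith [mul_nonneg (by linarith : (0 : ℤ) ≤ (k n : ℤ) - 1) hP]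
  have pos : ∀ n, 2 ≤ n → n ≤ N → 1 ≤ rhoAux k n := by
    intro n hn
    induction n, hn using Nat.le_induction with
    | base =>
      intro _
      rw [h2]
      have a : (2 : ℤ) ≤ k 0 := by exact_mod_cast h0
      have b : (3 : ℤ) ≤ k 1 := by exact_mod_cast (by omega : 3 ≤ k 1)
      nlinarith
    | succ n hn ih =>
      intro h
      have := step n (by omega) (ih (by omega))
      omega
  rw [hr]
  constructor
  · intro h
    have hN2 : N = 2 := by
      by_contra hne
      obtain ⟨n, rfl⟩ : ∃ n, N = n + 1 := ⟨N - 1, by omega⟩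
      have := step n (by omega) (pos n (by omega) (by omega))
      omega
    subst hN2
    rw [h2] at h
    have a : (2 : ℤ) ≤ k 0 := by exact_mod_cast h0
    have b : (3 : ℤ) ≤ k 1 := by exact_mod_cast (by omega : 3 ≤ k 1)
    have e0 : (k 0 : ℤ) = 2 := by nlinarith
    have e1 : (k 1 : ℤ) = 3 := by nlinarith
    exact ⟨rfl, by exact_mod_cast e0, by exact_mod_cast e1⟩
  · rintro ⟨rfl, e0, e1⟩
    rw [h2, e0, e1]
    norm_num
end

section
/- Let N ≥ 5 and let k_1, …, k_N be as in the context. Then, as real numbers, M · (N − 2 − ∑_{i=1}^{N} 1/k_i) > (10/11) · 2^N · (N−4) · (N−1)^((N−1)/2), where the power with exponent (N−1)/2 is a real power. -/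
theorem k_lower_aux (N : ℕ) (k : ℕ → ℕ)
    (hk : ∀ i < N, 1 < k i)
    (hmono : ∀ i j, i < j → j < N → k i < k j)
    (hcop : ∀ i j, i < j → j < N → Nat.Coprime (k i) (k j)) (i : ℕ) (hi : i < N) :
    2 * i + 1 ≤ k i ∧ ((∀ j ≤ i, k j % 2 = 1) → 2 * i + 3 ≤ k i) := by
  induction i with
  | zero =>
    have h := hk 0 hi
    refine ⟨by omega, fun h2 => ?_⟩
    have := h2 0 le_rfl
    omega
  | succ i ih =>
    obtain ⟨h1, h2⟩ := ih (by omega)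
    have hlt := hmono i (i + 1) (by omega) hi
    refine ⟨?_, fun hodd => ?_⟩
    · by_cases hall : ∀ j ≤ i, k j % 2 = 1
      · have := h2 hall
        omega
      · push Not at hall
        obtain ⟨j, hj, hje⟩ := hall
        have hc := hcop j (i + 1) (by omega) hi
        have hodd : k (i + 1) % 2 = 1 := by
          by_contra hne
          have := Nat.dvd_gcd (show 2 ∣ k j by omega) (show 2 ∣ k (i + 1) by omega)
          rw [hc] at this
          omega
        omega
    · have a := h2 (fun j hj => hodd j (by omega))
      have b := hodd i (by omega)
      have c := hodd (i + 1) le_rfl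
      omega

theorem prod_sq_aux (n : ℕ) :
    (6 * n) ^ n ≤ (∏ i ∈ Finset.range n, (2 * i + 3)) ^ 2 := by
  have h : (∏ i ∈ Finset.range n, (2 * i + 3)) ^ 2
      = ∏ i ∈ Finset.range n, ((2 * i + 3) * (2 * (n - 1 - i) + 3)) := by
    rw [Finset.prod_mul_distrib, sq]
    congr 1
    exact (Finset.prod_range_reflect (fun i => 2 * i + 3) n).symm
  rw [h]
  calc (6 * n) ^ n = ∏ _i ∈ Finset.range n, (6 * n) := by simp
    _ ≤ _ := by
      refine Finset.prod_le_prod' fun i hi => ?_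
      have hi := Finset.mem_range.1 hi
      obtain ⟨j, rfl⟩ : ∃ j, n = i + j + 1 := ⟨n - 1 - i, by omega⟩
      have : i + j + 1 - 1 - i = j := by omega
      rw [this]
      nlinarith [Nat.zero_le (i * j)]

theorem pow_aux (n : ℕ) (hn : 4 ≤ n) : (400 : ℝ) * 4 ^ n < 121 * 6 ^ n := by
  induction n, hn using Nat.le_induction with
  | base => norm_num
  | succ n hn ih =>
    have : (0 : ℝ) < 4 ^ n := by positivity
    rw [pow_succ, pow_succ]
    linarith

/-- For pairwise coprime integers `1 < k 0 < ⋯ < k (N-1)` with `N ≥ 5` and `M = ∏ kᵢ`,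
as real numbers `M · (N - 2 - ∑ 1/kᵢ) > (10/11) · 2^N · (N-4) · (N-1)^((N-1)/2)`
(real power). -/
theorem M_times_excess_bound
    (N : ℕ) (hN : 5 ≤ N) (k : ℕ → ℕ)
    (hk : ∀ i < N, 1 < k i)
    (hmono : ∀ i j, i < j → j < N → k i < k j)
    (hcop : ∀ i j, i < j → j < N → Nat.Coprime (k i) (k j))
    (M : ℕ) (hM : M = ∏ i ∈ Finset.range N, k i) :
    (M : ℝ) * ((N : ℝ) - 2 - ∑ i ∈ Finset.range N, (1 : ℝ) / (k i : ℝ))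
      > 10 / 11 * (2 : ℝ) ^ N * ((N : ℝ) - 4) * ((N : ℝ) - 1) ^ (((N : ℝ) - 1) / 2) := by
  obtain ⟨n, rfl⟩ : ∃ n, N = n + 1 := ⟨N - 1, by omega⟩
  have hn : 4 ≤ n := by omega
  have hnR : (4 : ℝ) ≤ n := by exact_mod_cast hn
  set P : ℕ := ∏ i ∈ Finset.range n, (2 * i + 3) with hP
  have hMP : 2 * P ≤ M := by
    rw [hM, Finset.prod_range_succ', mul_comm]
    refine Nat.mul_le_mul (Finset.prod_le_prod' fun i hi => ?_) (hk 0 (by omega))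
    have := (k_lower_aux (n + 1) k hk hmono hcop (i + 1)
      (by have := Finset.mem_range.1 hi; omega)).1
    omega
  have hMPR : 2 * (P : ℝ) ≤ M := by exact_mod_cast hMP
  have hsum : ∑ i ∈ Finset.range (n + 1), (1 : ℝ) / (k i : ℝ) ≤ ((n : ℝ) + 1) / 2 := by
    calc ∑ i ∈ Finset.range (n + 1), (1 : ℝ) / (k i : ℝ)
        ≤ ∑ _i ∈ Finset.range (n + 1), (1 : ℝ) / 2 := by
          refine Finset.sum_le_sum fun i hi => ?_
          have h2 : (2 : ℝ) ≤ k i := by exact_mod_cast hk i (Finset.mem_range.1 hi)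
          exact one_div_le_one_div_of_le (by norm_num) h2
      _ = _ := by simp; ring
  have hPsq : (6 * (n : ℝ)) ^ n ≤ (P : ℝ) ^ 2 := by exact_mod_cast prod_sq_aux n
  have hcast : ((n + 1 : ℕ) : ℝ) = (n : ℝ) + 1 := by push_cast; ring
  rw [hcast]
  have e1 : (n : ℝ) + 1 - 1 = n := by ring
  rw [e1]
  set R : ℝ := (n : ℝ) ^ ((n : ℝ) / 2) with hR
  have hR2 : R ^ 2 = (n : ℝ) ^ n := by
    rw [hR, ← Real.rpow_natCast, ← Real.rpow_mul (by positivity), ← Real.rpow_natCast]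
    congr 1
    push_cast
    ring
  have hkey : 20 / 11 * 2 ^ n * R < (P : ℝ) := by
    refine lt_of_pow_lt_pow_left₀ 2 (by positivity) (lt_of_lt_of_le ?_ hPsq)
    have e : (20 / 11 * 2 ^ n * R) ^ 2 = 400 / 121 * 4 ^ n * (n : ℝ) ^ n := by
      rw [mul_pow, mul_pow, hR2, ← pow_mul, mul_comm n 2, pow_mul]
      norm_num
    rw [e, mul_pow]
    have := pow_aux n hn
    have hp : (0 : ℝ) < (n : ℝ) ^ n := by positivity
    exact mul_lt_mul_of_pos_right (by linarith) hp
  have h3 : (0 : ℝ) < (n : ℝ) - 3 := by linarith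
  calc 10 / 11 * (2 : ℝ) ^ (n + 1) * ((n : ℝ) + 1 - 4) * R
      = (20 / 11 * 2 ^ n * R) * ((n : ℝ) - 3) := by rw [pow_succ]; ring
    _ < P * ((n : ℝ) - 3) := mul_lt_mul_of_pos_right hkey h3
    _ = 2 * P * (((n : ℝ) - 3) / 2) := by ring
    _ ≤ M * (((n : ℝ) - 3) / 2) := mul_le_mul_of_nonneg_right hMPR (by linarith)
    _ ≤ _ := mul_le_mul_of_nonneg_left (by linarith) (by positivity)
end
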